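/- Assume the Felli–Schneider condition Λ = 4(d−1)/(q²−4). For ε ∈ [0,1) define E^{(2)}(ε) := inf { ∫_ℝ ((1−ε)((g′)² + (2d+Λ)g²) − (q−1)u^{q−2}g² − 2 f^{(2)} g) ds : g ∈ H¹(ℝ) }, where f^{(2)} := M u^{2q−3} √(2(d−1)/(d+2)) and M := (q−1)(q−2)√|𝕊^{d−1}|/(2d). Then, as ε → 0⁺, E^{(2)}(ε) = −(β^{3q−4}/α) · (|𝕊^{d−1}|/(4d²)) · (Γ((3q−4)/(q−2)) √π / Γ((3q−4)/(q−2) + 1/2)) · (q(q−1)(q−2)(d−1)/((d+2) P(−1))) · Σ_{k=0}^∞ (P(k−ξ) − P(k)) + O(ε). -/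

import Mathlib

/-!
With `A = 𝔞`, `b = 𝔟` the problem concerns the Pöschl–Teller operator
`L = -∂² + 4 A² α² - α² (2b - 3)(2b - 2) sech² (α s)` with source `F sech ^ (2 b) (α s)`, and the
leading constant is `-∫ f φ`, where `L φ = f`.

Applied to `sech ^ (2 b + 2 x)`, the operator produces only that power and the next one. Hence for
any `y` the series `∑ₖ G (k + y) sech ^ (2 b + 2 (k + y))` with explicit Gamma quotients `G`
(`coefG`) telescopes: `L` of its `n`-th partial sum consists of a bottom and a top boundary term
(`partSum_isSol`) with coefficients `coefH`. For `y = 0` the bottom term is a multiple of `f`; for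
`y = -ξ` it vanishes. The top terms are not small relative to `f`, as `coefH` grows like `n ^ (1 / 2)`,
but after scaling the `-ξ` series by a factor `λₙ → 1` the two top terms carry the same
coefficient, and by Bernoulli's inequality their difference is at most `O(n ^ (-1 / 2)) f`
(`sechPow_diff`). This gives approximate solutions `φₙ` of `L φ = f` with residuals at most
`eₙ f`, `eₙ → 0`. The construction needs `0 < ξ < 3 / 2`, a consequence of the Felli–Schneider
condition (`afrak_bounds`).

The condition `ξ < 3 / 2` also makes `L` coercive: completing the square with the ground state
`sech ^ (2 b - 3)` gives `⟨g, L g⟩ ≥ α² (4 A² - (2 b - 3)²) ‖g‖²` (`ptPot_coercive`). Testing with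
`φₙ` from above and completing the square from below, the infimum lies between `-I / (1 - ε D)` and
`-I` with `I = lim ∫ f φₙ` and a constant `D` (`sandwich`), which is the claimed `O(ε)` estimate.

The integrals `∫ sech ^ m` are symmetric Beta integrals (`cosh_rpow_integral`), so `∫ f φₙ` is a
difference of partial sums of `P (k - ξ)` and `P k`; both series converge since `P` decays like
`k ^ (-2)` (`coefP_summable`).
-/

open MeasureTheory Real Filter Topology Asymptotics

noncomputable section

/-- Euclidean space ℝ^d. -/
abbrev Ed (d : ℕ) : Type := EuclideanSpace ℝ (Fin d)

/-- The surface measure on the unit sphere 𝕊^{d-1}. -/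
def sphMeasure (d : ℕ) : Measure (Metric.sphere (0 : Ed d) 1) :=
  (volume : Measure (Ed d)).toSphere

/-- The total surface measure |𝕊^{d-1}|. -/
def sphVol (d : ℕ) : ℝ := (sphMeasure d Set.univ).toReal

/-- α = ((q-2)/2)√Λ. -/
def alphaV (q Λ : ℝ) : ℝ := (q - 2) / 2 * Real.sqrt Λ

/-- β = (qΛ/2)^{1/(q-2)}. -/
def betaV (q Λ : ℝ) : ℝ := (q * Λ / 2) ^ (1 / (q - 2))

/-- The optimizer u(s) = β cosh(αs)^{-2/(q-2)}. -/
def Ufun (q Λ : ℝ) (s : ℝ) : ℝ := betaV q Λ * Real.cosh (alphaV q Λ * s) ^ (-(2 / (q - 2)))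

/-- M = (q-1)(q-2)√|𝕊^{d-1}|/(2d). -/
def Mconst (d : ℕ) (q : ℝ) : ℝ := (q - 1) * (q - 2) * Real.sqrt (sphVol d) / (2 * d)

/-- The inhomogeneity f⁽⁰⁾ = M u^{2q-3}. -/
def f0fun (d : ℕ) (q Λ : ℝ) (s : ℝ) : ℝ := Mconst d q * Ufun q Λ s ^ (2 * q - 3)

/-- The inhomogeneity f⁽²⁾ = M u^{2q-3} √(2(d-1)/(d+2)). -/
def f2fun (d : ℕ) (q Λ : ℝ) (s : ℝ) : ℝ :=
  Mconst d q * Ufun q Λ s ^ (2 * q - 3) * Real.sqrt (2 * ((d : ℝ) - 1) / ((d : ℝ) + 2))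

/-- Surrogate for membership in H¹(ℝ). -/
def MemH1R (g : ℝ → ℝ) : Prop :=
  ContDiff ℝ 1 g ∧ Integrable (fun s => g s ^ 2) ∧ Integrable (fun s => deriv g s ^ 2)

/-- The energy functional 𝓔 with damping constant c, zeroth-order coefficient κ and
inhomogeneity f. -/
def Energy (q Λ c κ : ℝ) (f g : ℝ → ℝ) : ℝ :=
  ∫ s, ((1 - c) * (deriv g s ^ 2 + κ * g s ^ 2) - (q - 1) * Ufun q Λ s ^ (q - 2) * g s ^ 2
    - 2 * f s * g s)

/-- The minimization problem E⁽⁰⁾(ε) in the radial (degree 0) sector, subject to the two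
orthogonality constraints. -/
def E0 (d : ℕ) (q Λ ε : ℝ) : ℝ :=
  sInf {r : ℝ | ∃ g : ℝ → ℝ, MemH1R g ∧
    (∫ s, g s * Ufun q Λ s ^ (q - 1)) = 0 ∧
    (∫ s, g s * Ufun q Λ s ^ (q - 2) * deriv (Ufun q Λ) s) = 0 ∧
    r = Energy q Λ ε Λ (f0fun d q Λ) g}

/-- The minimization problem E⁽²⁾(ε) in the degree 2 sector. -/
def E2 (d : ℕ) (q Λ ε : ℝ) : ℝ :=
  sInf {r : ℝ | ∃ g : ℝ → ℝ, MemH1R g ∧ r = Energy q Λ ε (2 * d + Λ) (f2fun d q Λ) g}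

end

noncomputable section

/-- 𝔞 = √(1 + 2d/Λ)/(q-2). -/
def afrak (d : ℕ) (q Λ : ℝ) : ℝ := Real.sqrt (1 + 2 * d / Λ) / (q - 2)

/-- 𝔟 = (2q-3)/(q-2). -/
def bfrak (q : ℝ) : ℝ := (2 * q - 3) / (q - 2)

/-- ξ = 𝔟 - 𝔞. -/
def xiV (d : ℕ) (q Λ : ℝ) : ℝ := bfrak q - afrak d q Λ

/-- The function P built from Gamma factors. -/
def Pfun (d : ℕ) (q Λ : ℝ) (x : ℝ) : ℝ :=
  Real.Gamma (x + 3 / 2) * Real.Gamma (x + 2 * bfrak q - 1) * Real.Gamma (x + 2 * bfrak q) /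
    (Real.Gamma (x + bfrak q - afrak d q Λ + 1) * Real.Gamma (x + bfrak q + afrak d q Λ + 1) *
      Real.Gamma (x + 2 * bfrak q + 1 / 2))

/-- The constant J(q,d). -/
def Jconst (d : ℕ) (q Λ : ℝ) : ℝ :=
  (q - 2) * (3 * q - 2) / (2 * (5 * q - 6)) *
    ((3 * q - 4) / (4 * (q - 1)) - (q - 3) * d / (q * (d + 2)) -
      (d - 1) / (d + 2) *
        ∑' k : ℕ, (Pfun d q Λ ((k : ℝ) - xiV d q Λ) - Pfun d q Λ (k : ℝ)) / Pfun d q Λ (-1))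

end

/-! ### Beta integrals and Gamma asymptotics -/

lemma beta_integrable_and_integral {u : ℝ} (hu : 0 < u) :
    IntegrableOn (fun x : ℝ => x ^ (u - 1) * (1 - x) ^ (u - 1)) (Set.Ioo 0 1) ∧
    ∫ x in Set.Ioo (0 : ℝ) 1, x ^ (u - 1) * (1 - x) ^ (u - 1) =
      Real.Gamma u * Real.Gamma u / Real.Gamma (2 * u) := by
  have hc := Complex.betaIntegral_convergent (u := u) (v := u) (by simpa) (by simpa)
  rw [intervalIntegrable_iff_integrableOn_Ioc_of_le (by simp)] at hc
  have hc' := hc.mono_set Set.Ioo_subset_Ioc_self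
  have hpt : ∀ x ∈ Set.Ioo (0 : ℝ) 1,
      (x : ℂ) ^ ((u : ℂ) - 1) * (1 - (x : ℂ)) ^ ((u : ℂ) - 1) =
        ((x ^ (u - 1) * (1 - x) ^ (u - 1) : ℝ) : ℂ) := by
    intro x hx
    rw [Complex.ofReal_mul, Complex.ofReal_cpow hx.1.le, Complex.ofReal_cpow (by linarith [hx.2])]
    push_cast; rfl
  have hi : IntegrableOn (fun x : ℝ => ((x ^ (u - 1) * (1 - x) ^ (u - 1) : ℝ) : ℂ))
      (Set.Ioo 0 1) := hc'.congr_fun hpt measurableSet_Ioo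
  refine ⟨by rw [IntegrableOn]; simpa using hi.re, ?_⟩
  have hb := Complex.betaIntegral_eq_Gamma_mul_div (u : ℂ) (u : ℂ) (by simpa) (by simpa)
  rw [Complex.betaIntegral, intervalIntegral.integral_of_le zero_le_one,
    integral_Ioc_eq_integral_Ioo, setIntegral_congr_fun measurableSet_Ioo hpt,
    integral_complex_ofReal, ← Complex.ofReal_add, Complex.Gamma_ofReal, Complex.Gamma_ofReal,
    ← two_mul] at hb
  exact_mod_cast hb

lemma sigmoid_cosh (t : ℝ) :
    sigmoid t * (1 - sigmoid t) = (4 * cosh (t / 2) ^ 2)⁻¹ := by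
  have h : 4 * cosh (t / 2) ^ 2 = (1 + exp (-t)) * (1 + exp t) := by
    have h1 : exp (t / 2) * exp (t / 2) = exp t := by rw [← exp_add]; ring_nf
    have h2 : exp (-(t / 2)) * exp (-(t / 2)) = exp (-t) := by rw [← exp_add]; ring_nf
    have h3 : exp (t / 2) * exp (-(t / 2)) = 1 := by rw [← exp_add]; simp
    have h4 : exp t * exp (-t) = 1 := by rw [← exp_add]; simp
    rw [cosh_eq]
    linear_combination h1 + h2 + 2 * h3 - h4
  rw [h, ← sigmoid_neg, sigmoid_def, sigmoid_def, neg_neg, mul_inv]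

/-- The substitution `x = sigmoid t` turns the symmetric Beta integral into this one; the
duplication formula simplifies the result. -/
lemma cosh_half {m : ℝ} (hm : 0 < m) :
    Integrable (fun t : ℝ => cosh (t / 2) ^ (-m)) ∧
    ∫ t : ℝ, cosh (t / 2) ^ (-m) = 2 * (√π * Real.Gamma (m / 2) / Real.Gamma (m / 2 + 1 / 2)) := by
  have hu : 0 < m / 2 := by positivity
  obtain ⟨h1, h2⟩ := beta_integrable_and_integral hu
  have himg : Set.image sigmoid Set.univ = Set.Ioo 0 1 := by rw [Set.image_univ, range_sigmoid]
  have hpt : ∀ t : ℝ, |sigmoid t * (1 - sigmoid t)| •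
      (sigmoid t ^ (m / 2 - 1) * (1 - sigmoid t) ^ (m / 2 - 1)) =
      (2 : ℝ) ^ (-m) * cosh (t / 2) ^ (-m) := by
    intro t
    have ha := sigmoid_pos t
    have hb : 0 < 1 - sigmoid t := by linarith [sigmoid_lt_one t]
    have hcp := cosh_pos (t / 2)
    rw [abs_of_pos (mul_pos ha hb), smul_eq_mul, ← mul_rpow ha.le hb.le]
    conv_lhs => enter [1]; rw [← rpow_one (sigmoid t * (1 - sigmoid t))]
    rw [← rpow_add (mul_pos ha hb), sigmoid_cosh, ← mul_rpow (by norm_num) hcp.le,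
      show 4 * cosh (t / 2) ^ 2 = (2 * cosh (t / 2)) ^ (2 : ℝ) by norm_cast; ring,
      ← rpow_neg (by positivity), ← rpow_mul (by positivity)]
    congr 1; ring
  rw [← himg] at h1 h2
  rw [integrableOn_image_iff_integrableOn_abs_deriv_smul MeasurableSet.univ
    (fun t _ => (hasDerivAt_sigmoid t).hasDerivWithinAt) sigmoid_injective.injOn] at h1
  rw [integral_image_eq_integral_abs_deriv_smul MeasurableSet.univ
    (fun t _ => (hasDerivAt_sigmoid t).hasDerivWithinAt) sigmoid_injective.injOn] at h2
  simp only [hpt, integrableOn_univ, setIntegral_univ, integral_const_mul] at h1 h2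
  have h2p : (0 : ℝ) < 2 ^ (-m) := by positivity
  refine ⟨by simpa [← mul_assoc, ← rpow_add] using h1.const_mul ((2 : ℝ) ^ m), ?_⟩
  have hd := Real.Gamma_mul_Gamma_add_half (m / 2)
  have hG := (Real.Gamma_pos_of_pos hu).ne'
  have hG2 := (Real.Gamma_pos_of_pos (show 0 < m / 2 + 1 / 2 by positivity)).ne'
  have hG3 := (Real.Gamma_pos_of_pos (show 0 < 2 * (m / 2) by positivity)).ne'
  rw [show 1 - 2 * (m / 2) = 1 + -m by ring, rpow_add (by norm_num), rpow_one] at hd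
  rw [eq_div_iff hG3] at h2
  have : Real.Gamma (2 * (m / 2)) * 2 ^ (-m) ≠ 0 := by positivity
  rw [← mul_div_assoc, eq_div_iff hG2]
  apply mul_left_cancel₀ this
  linear_combination Real.Gamma (m / 2 + 1 / 2) * h2 + Real.Gamma (m / 2) * hd

lemma cosh_rpow_integral {α m : ℝ} (hα : 0 < α) (hm : 0 < m) :
    Integrable (fun s : ℝ => cosh (α * s) ^ (-m)) ∧
    ∫ s : ℝ, cosh (α * s) ^ (-m) =
      √π / α * (Real.Gamma (m / 2) / Real.Gamma (m / 2 + 1 / 2)) := by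
  obtain ⟨h1, h2⟩ := cosh_half hm
  have e : ∀ s, cosh (α * s) ^ (-m) = (fun t : ℝ => cosh (t / 2) ^ (-m)) ((2 * α) * s) := by
    intro s; simp only []; congr 2; ring
  constructor
  · simp only [e]
    exact h1.comp_mul_left' (by positivity)
  · simp only [e]
    rw [Measure.integral_comp_mul_left (fun t : ℝ => cosh (t / 2) ^ (-m)), h2,
      abs_of_pos (by positivity), smul_eq_mul]
    field_simp

/-- `Γ(n + 1 + s) / Γ(n + 1 + t) ~ n ^ (s - t)`, from Euler's limit formula. -/
lemma Gamma_ratio {s t : ℝ} (hs : -1 < s) (ht : -1 < t) :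
    Tendsto (fun n : ℕ => Real.Gamma (n + 1 + s) / Real.Gamma (n + 1 + t) * (n : ℝ) ^ (t - s))
      atTop (𝓝 1) := by
  have hprod : ∀ (r : ℝ), 0 < r → ∀ n : ℕ,
      Real.Gamma (n + 1 + r) = (∏ j ∈ Finset.range (n + 1), (r + j)) * Real.Gamma r := by
    intro r hr n
    induction n with
    | zero => simp [add_comm 1 r, Real.Gamma_add_one hr.ne']
    | succ n ih =>
      rw [Finset.prod_range_succ, mul_right_comm, ← ih,
        show ((n + 1 : ℕ) : ℝ) + 1 + r = (n + 1 + r) + 1 by push_cast; ring,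
        Real.Gamma_add_one (by positivity)]
      push_cast; ring
  have hlin : ∀ r : ℝ, Tendsto (fun n : ℕ => ((n : ℝ) + r) / n) atTop (𝓝 1) := by
    intro r
    have : Tendsto (fun n : ℕ => 1 + r / (n : ℝ)) atTop (𝓝 (1 + 0)) :=
      tendsto_const_nhds.add (tendsto_const_div_atTop_nhds_zero_nat r)
    rw [add_zero] at this
    refine this.congr' ?_
    filter_upwards [eventually_gt_atTop 0] with n hn
    have : (n : ℝ) ≠ 0 := by positivity
    field_simp
  have hsG := Real.Gamma_pos_of_pos (show 0 < s + 1 by linarith)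
  have htG := Real.Gamma_pos_of_pos (show 0 < t + 1 by linarith)
  have key := (((Real.GammaSeq_tendsto_Gamma (t + 1)).div (Real.GammaSeq_tendsto_Gamma (s + 1))
    hsG.ne').mul_const (Real.Gamma (s + 1) / Real.Gamma (t + 1))).mul
    ((hlin (1 + t)).div (hlin (1 + s)) one_ne_zero)
  have e1 : Real.Gamma (t + 1) / Real.Gamma (s + 1) * (Real.Gamma (s + 1) / Real.Gamma (t + 1)) *
    (1 / 1) = 1 := by field_simp
  rw [e1] at key
  refine key.congr' ?_
  filter_upwards [eventually_gt_atTop 0] with n hn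
  have hn' : (0 : ℝ) < n := by positivity
  have p1 := hprod (s + 1) (by linarith) n
  have p2 := hprod (t + 1) (by linarith) n
  have a1 : (n : ℝ) + 1 + s ≠ 0 := by linarith
  have a2 : (n : ℝ) + 1 + t ≠ 0 := by linarith
  rw [show (n : ℝ) + 1 + (s + 1) = (n + 1 + s) + 1 by ring, Real.Gamma_add_one a1] at p1
  rw [show (n : ℝ) + 1 + (t + 1) = (n + 1 + t) + 1 by ring, Real.Gamma_add_one a2] at p2
  have g1 : (0 : ℝ) < ∏ j ∈ Finset.range (n + 1), (s + 1 + j) :=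
    Finset.prod_pos fun j _ => by have : (0:ℝ) ≤ j := j.cast_nonneg; linarith
  have g2 : (0 : ℝ) < ∏ j ∈ Finset.range (n + 1), (t + 1 + j) :=
    Finset.prod_pos fun j _ => by have : (0:ℝ) ≤ j := j.cast_nonneg; linarith
  have q1 : Real.Gamma (n + 1 + s) =
    (∏ j ∈ Finset.range (n + 1), (s + 1 + j)) * Real.Gamma (s + 1) / (n + 1 + s) := by
    rw [eq_div_iff a1, ← p1]; ring
  have q2 : Real.Gamma (n + 1 + t) =
    (∏ j ∈ Finset.range (n + 1), (t + 1 + j)) * Real.Gamma (t + 1) / (n + 1 + t) := by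
    rw [eq_div_iff a2, ← p2]; ring
  rw [q1, q2, show t - s = (t + 1) - (s + 1) by ring, rpow_sub hn']
  simp only [Pi.div_apply, Real.GammaSeq]
  have r1 : (n : ℝ) ^ (s + 1) ≠ 0 := by positivity
  have r2 : (n : ℝ) ^ (t + 1) ≠ 0 := by positivity
  have r3 : (n.factorial : ℝ) ≠ 0 := by positivity
  have a1' : (n : ℝ) + (1 + s) ≠ 0 := by linarith
  have a2' : (n : ℝ) + (1 + t) ≠ 0 := by linarith
  field_simp
  ring
/-! ### Square-integrable functions and the quadratic form -/

lemma integrable_mul_of_sq {f g : ℝ → ℝ} (hf : Continuous f) (hg : Continuous g)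
    (hf2 : Integrable fun s => f s ^ 2) (hg2 : Integrable fun s => g s ^ 2) :
    Integrable fun s => f s * g s := by
  refine (hf2.add hg2).mono' (hf.mul hg).aestronglyMeasurable (ae_of_all _ fun s => ?_)
  rw [Real.norm_eq_abs, abs_le, Pi.add_apply]
  constructor <;> nlinarith [sq_nonneg (f s + g s), sq_nonneg (f s - g s)]

lemma integrable_bdd_mul {V f : ℝ → ℝ} {W : ℝ} (hV : Continuous V) (hW : ∀ s, |V s| ≤ W)
    (hf : Integrable f) : Integrable fun s => V s * f s :=
  hf.bdd_mul hV.aestronglyMeasurable (ae_of_all _ fun s => by simpa using hW s)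

lemma integrable_sq_lin {f g : ℝ → ℝ} (a b : ℝ) (hf : Continuous f) (hg : Continuous g)
    (hf2 : Integrable fun s => f s ^ 2) (hg2 : Integrable fun s => g s ^ 2) :
    Integrable fun s => (a * f s + b * g s) ^ 2 := by
  have h := ((hf2.const_mul (a ^ 2)).add
    ((integrable_mul_of_sq hf hg hf2 hg2).const_mul (2 * a * b))).add (hg2.const_mul (b ^ 2))
  refine h.congr (ae_of_all _ fun s => ?_)
  simp only [Pi.add_apply]; ring

lemma MemH1R.cont {g : ℝ → ℝ} (hg : MemH1R g) : Continuous g := hg.1.continuous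

lemma MemH1R.contDeriv {g : ℝ → ℝ} (hg : MemH1R g) : Continuous (deriv g) :=
  hg.1.continuous_deriv le_rfl

lemma MemH1R.hasDeriv {g : ℝ → ℝ} (hg : MemH1R g) (s : ℝ) : HasDerivAt g (deriv g s) s :=
  (hg.1.differentiable one_ne_zero s).hasDerivAt

lemma MemH1R.deriv_lin {g h : ℝ → ℝ} (hg : MemH1R g) (hh : MemH1R h) (a b : ℝ) :
    deriv (fun s => a * g s + b * h s) = fun s => a * deriv g s + b * deriv h s :=
  funext fun s => (((hg.hasDeriv s).const_mul a).add ((hh.hasDeriv s).const_mul b)).deriv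

lemma MemH1R.lin {g h : ℝ → ℝ} (hg : MemH1R g) (hh : MemH1R h) (a b : ℝ) :
    MemH1R fun s => a * g s + b * h s := by
  refine ⟨(contDiff_const.mul hg.1).add (contDiff_const.mul hh.1),
    integrable_sq_lin a b hg.cont hh.cont hg.2.1 hh.2.1, ?_⟩
  rw [hg.deriv_lin hh]
  exact integrable_sq_lin a b hg.contDeriv hh.contDeriv hg.2.2 hh.2.2

/-- The bilinear form of the Schrödinger operator `-∂² + κ - V`. -/
noncomputable def Bil (κ : ℝ) (V φ g : ℝ → ℝ) : ℝ :=
  ∫ s, (deriv φ s * deriv g s + κ * (φ s * g s) - V s * (φ s * g s))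

/-- `φ` is a twice differentiable solution of `-φ'' + κ φ - V φ = h` for which
`φ, φ', φ''` are all square integrable. -/
def IsSol (κ : ℝ) (V φ h : ℝ → ℝ) : Prop :=
  ∃ φ1 φ2 : ℝ → ℝ, (∀ s, HasDerivAt φ (φ1 s) s) ∧ (∀ s, HasDerivAt φ1 (φ2 s) s) ∧
    Continuous φ2 ∧ (Integrable fun s => φ s ^ 2) ∧ (Integrable fun s => φ1 s ^ 2) ∧
    (Integrable fun s => φ2 s ^ 2) ∧ ∀ s, -φ2 s + κ * φ s - V s * φ s = h s

lemma IsSol.lin {κ : ℝ} {V φ ψ h k : ℝ → ℝ} (hφ : IsSol κ V φ h) (hψ : IsSol κ V ψ k) (a b : ℝ) :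
    IsSol κ V (fun s => a * φ s + b * ψ s) (fun s => a * h s + b * k s) := by
  obtain ⟨φ1, φ2, d1, d2, c2, i0, i1, i2, e⟩ := hφ
  obtain ⟨ψ1, ψ2, d1', d2', c2', i0', i1', i2', e'⟩ := hψ
  have c (f f' : ℝ → ℝ) (h : ∀ s, HasDerivAt f (f' s) s) : Continuous f :=
    continuous_iff_continuousAt.2 fun s => (h s).continuousAt
  refine ⟨fun s => a * φ1 s + b * ψ1 s, fun s => a * φ2 s + b * ψ2 s,
    fun s => ((d1 s).const_mul a).add ((d1' s).const_mul b),
    fun s => ((d2 s).const_mul a).add ((d2' s).const_mul b), by fun_prop,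
    integrable_sq_lin a b (c _ _ d1) (c _ _ d1') i0 i0',
    integrable_sq_lin a b (c _ _ d2) (c _ _ d2') i1 i1',
    integrable_sq_lin a b c2 c2' i2 i2', fun s => ?_⟩
  linear_combination a * e s + b * e' s

lemma IsSol.zero (κ : ℝ) (V : ℝ → ℝ) : IsSol κ V (fun _ => 0) (fun _ => 0) :=
  ⟨fun _ => 0, fun _ => 0, fun _ => hasDerivAt_const _ _, fun _ => hasDerivAt_const _ _,
    continuous_const, by simp, by simp, by simp, by simp⟩

lemma IsSol.memH1R {κ : ℝ} {V φ h : ℝ → ℝ} (hφ : IsSol κ V φ h) : MemH1R φ := by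
  obtain ⟨φ1, φ2, d1, d2, c2, i0, i1, i2, e⟩ := hφ
  have hd : deriv φ = φ1 := funext fun s => (d1 s).deriv
  refine ⟨contDiff_one_iff_deriv.2 ⟨fun s => (d1 s).differentiableAt, ?_⟩, i0, by rwa [hd]⟩
  rw [hd]
  exact continuous_iff_continuousAt.2 fun s => (d2 s).continuousAt

lemma integrable_bil {κ W : ℝ} {V : ℝ → ℝ} (hV : Continuous V) (hW : ∀ s, |V s| ≤ W)
    {φ g : ℝ → ℝ} (hφ : MemH1R φ) (hg : MemH1R g) :
    Integrable fun s => deriv φ s * deriv g s + κ * (φ s * g s) - V s * (φ s * g s) :=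
  have h := integrable_mul_of_sq hφ.cont hg.cont hφ.2.1 hg.2.1
  ((integrable_mul_of_sq hφ.contDeriv hg.contDeriv hφ.2.2 hg.2.2).add (h.const_mul κ)).sub
    (integrable_bdd_mul hV hW h)

lemma bil_expand {κ W : ℝ} {V : ℝ → ℝ} (hV : Continuous V) (hW : ∀ s, |V s| ≤ W)
    {φ g : ℝ → ℝ} (hφ : MemH1R φ) (hg : MemH1R g) (a : ℝ) :
    Bil κ V (fun s => a * g s + (-1) * φ s) (fun s => a * g s + (-1) * φ s) =
      a ^ 2 * Bil κ V g g - 2 * a * Bil κ V φ g + Bil κ V φ φ := by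
  have h1 := (integrable_bil (κ := κ) hV hW hg hg).const_mul (a ^ 2)
  have h2 := (integrable_bil (κ := κ) hV hW hφ hg).const_mul (2 * a)
  have h3 := integrable_bil (κ := κ) hV hW hφ hφ
  have h12 : Integrable fun s =>
      a ^ 2 * (deriv g s * deriv g s + κ * (g s * g s) - V s * (g s * g s)) -
        2 * a * (deriv φ s * deriv g s + κ * (φ s * g s) - V s * (φ s * g s)) := h1.sub h2
  unfold Bil
  rw [← integral_const_mul, ← integral_const_mul, ← integral_sub h1 h2, ← integral_add h12 h3]
  refine integral_congr_ae (ae_of_all _ fun s => ?_)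
  simp only [hg.deriv_lin hφ]
  ring

/-- A classical solution is a weak solution: one integration by parts. -/
lemma IsSol.weak {κ W : ℝ} {V : ℝ → ℝ} (hV : Continuous V) (hW : ∀ s, |V s| ≤ W)
    {φ h g : ℝ → ℝ} (hφ : IsSol κ V φ h) (hg : MemH1R g) :
    Integrable (fun s => h s * g s) ∧ Bil κ V φ g = ∫ s, h s * g s := by
  have hm := hφ.memH1R
  obtain ⟨φ1, φ2, d1, d2, c2, i0, i1, i2, e⟩ := hφ
  have hd : deriv φ = φ1 := funext fun s => (d1 s).deriv
  have c1 : Continuous φ1 := hd ▸ hm.contDeriv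
  have j1 := integrable_mul_of_sq c1 hg.contDeriv i1 hg.2.2
  have j2 := integrable_mul_of_sq c2 hg.cont i2 hg.2.1
  have j3 := integrable_mul_of_sq c1 hg.cont i1 hg.2.1
  have j0 := integrable_mul_of_sq hm.cont hg.cont i0 hg.2.1
  have j4 := (j0.const_mul κ).sub (integrable_bdd_mul hV hW j0)
  have ibp := integral_mul_deriv_eq_deriv_mul_of_integrable (u := φ1) (v := g) (u' := φ2)
    (v' := deriv g) (fun s _ => d2 s) (fun s _ => hg.hasDeriv s) j1 j2 j3
  have hh : ∀ s, h s * g s = -(φ2 s * g s) + (κ * (φ s * g s) - V s * (φ s * g s)) := by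
    intro s; rw [← e]; ring
  constructor
  · exact (j2.neg.add j4).congr (ae_of_all _ fun s => (hh s).symm)
  · simp only [Bil, hh, hd, add_sub_assoc]
    have k1 := integral_add j1 j4
    have k2 := integral_add j2.neg j4
    simp only [Pi.neg_apply, Pi.sub_apply] at k1 k2
    rw [k1, k2, integral_neg, ibp]

/-- The variational sandwich. If the form is coercive and there are approximate solutions `φ n`
of `-φ'' + κ φ - V φ = f` whose residuals are dominated by `e n * f` with `e n → 0`, then the
infimum of the perturbed energy lies between `-I / (1 - ε D)` and `-I`, where
`I = lim ∫ f φ n` and `D = 1 + W C`. -/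
lemma sandwich {κ W : ℝ} {V : ℝ → ℝ} (hV : Continuous V) (hW : ∀ s, |V s| ≤ W)
    {C : ℝ} (hκ : 0 < κ) (hC : 0 < C)
    (hpos : ∀ g, MemH1R g → ∫ s, g s ^ 2 ≤ C * Bil κ V g g)
    {f : ℝ → ℝ} (hf : Continuous f) (hf2 : Integrable fun s => f s ^ 2)
    {φ r : ℕ → ℝ → ℝ} {e : ℕ → ℝ} (hsol : ∀ n, IsSol κ V (φ n) (fun s => f s + r n s))
    (hr : ∀ n s, |r n s| ≤ e n * f s) (he0 : ∀ n, 0 ≤ e n) (he : Tendsto e atTop (𝓝 0))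
    {I : ℝ} (hI : Tendsto (fun n => ∫ s, f s * φ n s) atTop (𝓝 I)) {ε : ℝ} (hε : 0 ≤ ε)
    (hε' : ε * (1 + W * C) < 1) {E : ℝ}
    (hE : E = sInf {x : ℝ | ∃ g : ℝ → ℝ, MemH1R g ∧ x = ∫ s,
      ((1 - ε) * (deriv g s ^ 2 + κ * g s ^ 2) - V s * g s ^ 2 - 2 * f s * g s)}) :
    -(I / (1 - ε * (1 + W * C))) ≤ E ∧ E ≤ -I := by
  have hW0 : 0 ≤ W := (abs_nonneg _).trans (hW 0)
  set D := 1 + W * C with hD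
  set C1 := ∫ s, f s ^ 2 with hC1
  -- the energy split into the form, the damping and the linear term
  have hen : ∀ g, MemH1R g → ∃ N : ℝ, 0 ≤ N ∧ N ≤ D * Bil κ V g g ∧
      ∫ s, ((1 - ε) * (deriv g s ^ 2 + κ * g s ^ 2) - V s * g s ^ 2 - 2 * f s * g s) =
        Bil κ V g g - ε * N - 2 * ∫ s, f s * g s := by
    intro g hg
    have i1 := integrable_bil (κ := κ) hV hW hg hg
    have i2 : Integrable fun s => deriv g s ^ 2 + κ * g s ^ 2 := hg.2.2.add (hg.2.1.const_mul κ)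
    have i3 := integrable_mul_of_sq hf hg.cont hf2 hg.2.1
    have i4 := integrable_bdd_mul hV hW hg.2.1
    refine ⟨∫ s, (deriv g s ^ 2 + κ * g s ^ 2), integral_nonneg fun s => by positivity, ?_, ?_⟩
    · have h1 : ∫ s, (deriv g s ^ 2 + κ * g s ^ 2) ≤ Bil κ V g g + W * ∫ s, g s ^ 2 := by
        unfold Bil
        rw [← integral_const_mul, ← integral_add i1 (hg.2.1.const_mul W)]
        refine integral_mono i2 (i1.add (hg.2.1.const_mul W)) fun s => ?_
        nlinarith [mul_le_mul_of_nonneg_right ((le_abs_self _).trans (hW s)) (sq_nonneg (g s))]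
      have h2 := mul_le_mul_of_nonneg_left (hpos g hg) hW0
      rw [hD]; linarith
    · have i5 : Integrable fun s => deriv g s * deriv g s + κ * (g s * g s) -
          V s * (g s * g s) - ε * (deriv g s ^ 2 + κ * g s ^ 2) := i1.sub (i2.const_mul ε)
      unfold Bil
      rw [← integral_const_mul, ← integral_const_mul, ← integral_sub i1 (i2.const_mul ε),
        ← integral_sub i5 (i3.const_mul 2)]
      refine integral_congr_ae (ae_of_all _ fun s => ?_)
      ring
  have hQ0 : ∀ g, MemH1R g → 0 ≤ Bil κ V g g := fun g hg => by
    have := (integral_nonneg fun s => sq_nonneg (g s)).trans (hpos g hg)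
    exact nonneg_of_mul_nonneg_right this hC
  -- the residual tested against `g`
  have hres : ∀ n g, MemH1R g →
      2 * |Bil κ V (φ n) g - ∫ s, f s * g s| ≤ e n * (C1 + C * Bil κ V g g) := by
    intro n g hg
    obtain ⟨w1, w2⟩ := IsSol.weak hV hW (hsol n) hg
    have i3 := integrable_mul_of_sq hf hg.cont hf2 hg.2.1
    rw [w2, ← integral_sub w1 i3]
    have h1 : |∫ s, ((f s + r n s) * g s - f s * g s)| ≤
        ∫ s, e n / 2 * (f s ^ 2 + g s ^ 2) := by
      refine abs_integral_le_integral_abs.trans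
        (integral_mono (w1.sub i3).abs ((hf2.add hg.2.1).const_mul _) fun s => ?_)
      beta_reduce
      rw [show (f s + r n s) * g s - f s * g s = r n s * g s by ring, abs_mul]
      have h2 := mul_le_mul_of_nonneg_right (hr n s) (abs_nonneg (g s))
      have h3 : f s * |g s| ≤ (f s ^ 2 + g s ^ 2) / 2 := by
        nlinarith [sq_nonneg (f s - |g s|), sq_abs (g s)]
      have h4 := mul_le_mul_of_nonneg_left h3 (he0 n)
      linarith
    rw [integral_const_mul, integral_add hf2 hg.2.1] at h1
    have h5 := mul_le_mul_of_nonneg_left (hpos g hg) (he0 n)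
    linarith
  set J : ℕ → ℝ := fun n => ∫ s, f s * φ n s with hJ
  have hC10 : 0 ≤ C1 := integral_nonneg fun s => sq_nonneg _
  have hQn : ∀ n, C * e n < 1 → Bil κ V (φ n) (φ n) ≤ (J n + e n * C1) / (1 - C * e n) := by
    intro n hn
    rw [le_div_iff₀ (by linarith)]
    have h := hres n _ (hsol n).memH1R
    have h' := le_abs_self (Bil κ V (φ n) (φ n) - ∫ s, f s * φ n s)
    have h0 := abs_nonneg (Bil κ V (φ n) (φ n) - ∫ s, f s * φ n s)
    simp only [hJ]
    nlinarith
  have hU : Tendsto (fun n => (J n + e n * C1) / (1 - C * e n)) atTop (𝓝 I) := by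
    have := (hI.add (he.mul_const C1)).div ((tendsto_const_nhds (x := (1 : ℝ))).sub
      (he.const_mul C)) (by simp)
    simpa [Pi.div_def] using this
  have hη : Tendsto (fun n => 1 - ε * D - C * e n) atTop (𝓝 (1 - ε * D)) := by
    simpa using (tendsto_const_nhds (x := 1 - ε * D)).sub (he.const_mul C)
  have hev1 : ∀ᶠ n in atTop, 0 < 1 - ε * D - C * e n :=
    hη.eventually (lt_mem_nhds (by linarith))
  have hD0 : 0 ≤ D := by rw [hD]; positivity
  have hev2 : ∀ᶠ n in atTop, C * e n < 1 := by
    filter_upwards [hev1] with n hn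
    nlinarith [mul_nonneg hε hD0]
  have hlow : ∀ g, MemH1R g → -(I / (1 - ε * D)) ≤ ∫ s,
      ((1 - ε) * (deriv g s ^ 2 + κ * g s ^ 2) - V s * g s ^ 2 - 2 * f s * g s) := by
    intro g hg
    have hlim : Tendsto (fun n => -((J n + e n * C1) / (1 - C * e n) / (1 - ε * D - C * e n))
        - e n * C1) atTop (𝓝 (-(I / (1 - ε * D)))) := by
      simpa using ((hU.div hη (by linarith)).neg).sub (he.mul_const C1)
    refine le_of_tendsto hlim ?_
    filter_upwards [hev1, hev2] with n h1 h2
    obtain ⟨N, hN0, hN, heq⟩ := hen g hg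
    rw [heq]
    set η := 1 - ε * D - C * e n with hηd
    have hb := hQ0 _ (hg.lin (hsol n).memH1R η (-1))
    rw [bil_expand hV hW (hsol n).memH1R hg] at hb
    have hq := hQn n h2
    have hrs := hres n g hg
    have hab := neg_abs_le (Bil κ V (φ n) g - ∫ s, f s * g s)
    have hN' := mul_le_mul_of_nonneg_left hN hε
    have hdiv : (J n + e n * C1) / (1 - C * e n) / η ≥ Bil κ V (φ n) (φ n) / η := by gcongr
    have hsq : 0 ≤ η * Bil κ V g g - 2 * Bil κ V (φ n) g + Bil κ V (φ n) (φ n) / η := by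
      have : η * Bil κ V g g - 2 * Bil κ V (φ n) g + Bil κ V (φ n) (φ n) / η =
        (η ^ 2 * Bil κ V g g - 2 * η * Bil κ V (φ n) g + Bil κ V (φ n) (φ n)) / η := by
        field_simp
      rw [this]; positivity
    have : η * Bil κ V g g = Bil κ V g g - ε * (D * Bil κ V g g) - C * e n * Bil κ V g g := by
      rw [hηd]; ring
    nlinarith
  constructor
  · rw [hE]
    refine le_csInf ⟨_, φ 0, (hsol 0).memH1R, rfl⟩ ?_
    rintro x ⟨g, hg, rfl⟩
    exact hlow g hg
  · have hlim : Tendsto (fun n => (J n + e n * C1) / (1 - C * e n) - 2 * J n) atTop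
        (𝓝 (-I)) := by
      have := hU.sub (hI.const_mul 2)
      rwa [show I - 2 * I = -I by ring] at this
    refine ge_of_tendsto hlim ?_
    filter_upwards [hev2] with n h2
    obtain ⟨N, hN0, hN, heq⟩ := hen _ (hsol n).memH1R
    have hle : E ≤ ∫ s, ((1 - ε) * (deriv (φ n) s ^ 2 + κ * φ n s ^ 2) - V s * φ n s ^ 2
        - 2 * f s * φ n s) := by
      rw [hE]
      refine csInf_le ⟨-(I / (1 - ε * D)), ?_⟩ ⟨φ n, (hsol n).memH1R, rfl⟩
      rintro x ⟨g, hg, rfl⟩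
      exact hlow g hg
    rw [heq] at hle
    have := hQn n h2
    have := mul_nonneg hε hN0
    simp only [hJ] at *
    linarith

/-! ### Powers of the hyperbolic secant -/

/-- The function `s ↦ sech (α s) ^ m`, for a real exponent `m`. -/
noncomputable def sechPow (α m s : ℝ) : ℝ := cosh (α * s) ^ (-m)

lemma sechPow_pos (α m s : ℝ) : 0 < sechPow α m s := rpow_pos_of_pos (cosh_pos _) _

lemma sechPow_mul (α m n s : ℝ) : sechPow α m s * sechPow α n s = sechPow α (m + n) s := by
  unfold sechPow
  rw [← rpow_add (cosh_pos _)]; congr 1; ring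

lemma sechPow_sq (α m s : ℝ) : sechPow α m s ^ 2 = sechPow α (2 * m) s := by
  rw [sq, sechPow_mul, two_mul]

lemma cosh_mul_sechPow (α m s : ℝ) : cosh (α * s) * sechPow α (m + 1) s = sechPow α m s := by
  unfold sechPow
  conv_lhs => enter [1]; rw [← rpow_one (cosh (α * s))]
  rw [← rpow_add (cosh_pos _)]; congr 1; ring

lemma sinh_sq_mul_sechPow (α m s : ℝ) :
    sinh (α * s) ^ 2 * sechPow α (m + 2) s = sechPow α m s - sechPow α (m + 2) s := by
  have h1 := cosh_mul_sechPow α m s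
  have h2 := cosh_mul_sechPow α (m + 1) s
  rw [add_assoc, one_add_one_eq_two] at h2
  have h3 := cosh_sq (α * s)
  rw [← h1, ← h2]
  linear_combination -sechPow α (m + 2) s * h3

lemma sechPow_continuous (α m : ℝ) : Continuous (sechPow α m) := by
  unfold sechPow
  exact Continuous.rpow_const (by fun_prop) fun s => Or.inl (cosh_pos _).ne'

lemma sechPow_le_one (α : ℝ) {m : ℝ} (hm : 0 ≤ m) (s : ℝ) : sechPow α m s ≤ 1 :=
  rpow_le_one_of_one_le_of_nonpos (one_le_cosh _) (by linarith)

lemma sechPow_integrable {α m : ℝ} (hα : 0 < α) (hm : 0 < m) : Integrable (sechPow α m) :=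
  (cosh_rpow_integral hα hm).1

lemma sechPow_hasDerivAt (α m s : ℝ) :
    HasDerivAt (sechPow α m) (-(m * α) * (sinh (α * s) * sechPow α (m + 1) s)) s := by
  have h1 : HasDerivAt (fun s => cosh (α * s)) (sinh (α * s) * (α * 1)) s :=
    ((hasDerivAt_id s).const_mul α).cosh
  have h2 := h1.rpow_const (p := -m) (Or.inl (cosh_pos _).ne')
  refine h2.congr_deriv ?_
  unfold sechPow
  rw [show -(m + 1) = -m - 1 by ring]; ring

lemma sechPow_hasDerivAt' (α m s : ℝ) :
    HasDerivAt (fun s => sinh (α * s) * sechPow α (m + 1) s)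
      (α * (-m * sechPow α m s + (m + 1) * sechPow α (m + 2) s)) s := by
  have h1 : HasDerivAt (fun s => sinh (α * s)) (cosh (α * s) * (α * 1)) s :=
    ((hasDerivAt_id s).const_mul α).sinh
  have h2 := h1.mul (sechPow_hasDerivAt α (m + 1) s)
  refine h2.congr_deriv ?_
  have h3 := cosh_mul_sechPow α m s
  have h4 := sinh_sq_mul_sechPow α m s
  rw [show m + 1 + 1 = m + 2 by ring]
  linear_combination α * h3 - α * (m + 1) * h4

/-- The Pöschl–Teller potential `α² ν (ν + 1) sech² (α s)` with `ν = 2 b - 3`. -/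
noncomputable def ptPot (α b s : ℝ) : ℝ := α ^ 2 * ((2 * b - 3) * (2 * b - 2)) * sechPow α 2 s

lemma ptPot_continuous (α b : ℝ) : Continuous (ptPot α b) :=
  continuous_const.mul (sechPow_continuous α 2)

lemma ptPot_bound (α : ℝ) {b : ℝ} (hb : 2 < b) (s : ℝ) :
    |ptPot α b s| ≤ α ^ 2 * ((2 * b - 3) * (2 * b - 2)) := by
  have h : 0 ≤ α ^ 2 * ((2 * b - 3) * (2 * b - 2)) :=
    mul_nonneg (sq_nonneg _) (mul_nonneg (by linarith) (by linarith))
  rw [ptPot, abs_mul, abs_of_nonneg h, abs_of_pos (sechPow_pos _ _ _)]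
  exact mul_le_of_le_one_right h (sechPow_le_one α (by norm_num) s)

lemma sechPow_isSol {α m : ℝ} (A b : ℝ) (hα : 0 < α) (hm : 0 < m) :
    IsSol (4 * A ^ 2 * α ^ 2) (ptPot α b) (sechPow α m) (fun s => α ^ 2 *
      ((4 * A ^ 2 - m ^ 2) * sechPow α m s +
        (m * (m + 1) - (2 * b - 3) * (2 * b - 2)) * sechPow α (m + 2) s)) := by
  have i0 := sechPow_integrable hα (show 0 < 2 * m by linarith)
  have i1 := sechPow_integrable hα (show 0 < 2 * m + 2 by linarith)
  refine ⟨fun s => -(m * α) * (sinh (α * s) * sechPow α (m + 1) s),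
    fun s => -(m * α) * (α * (-m * sechPow α m s + (m + 1) * sechPow α (m + 2) s)),
    sechPow_hasDerivAt α m, fun s => (sechPow_hasDerivAt' α m s).const_mul _, ?_, ?_, ?_, ?_, ?_⟩
  · have := sechPow_continuous α m
    have := sechPow_continuous α (m + 2)
    fun_prop
  · simpa only [sechPow_sq] using i0
  · refine ((i0.sub i1).const_mul ((m * α) ^ 2)).congr (ae_of_all _ fun s => ?_)
    have h := sinh_sq_mul_sechPow α (2 * m) s
    have h' := sechPow_sq α (m + 1) s
    rw [show 2 * (m + 1) = 2 * m + 2 by ring] at h'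
    simp only [Pi.sub_apply]
    rw [← h, ← h']; ring
  · have := integrable_sq_lin (-(m * α) * α * -m) (-(m * α) * α * (m + 1))
      (sechPow_continuous α m) (sechPow_continuous α (m + 2))
      (by simpa only [sechPow_sq] using i0)
      (by simpa only [sechPow_sq] using
        sechPow_integrable hα (show 0 < 2 * (m + 2) by linarith))
    refine this.congr (ae_of_all _ fun s => ?_)
    ring
  · intro s
    have h := sechPow_mul α 2 m s
    rw [add_comm 2 m] at h
    rw [ptPot]
    linear_combination -(α ^ 2 * ((2 * b - 3) * (2 * b - 2))) * h

/-- Coercivity, by completing the square with the ground state `sech ^ ν` of the potential: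
`∫ (g' + ν α tanh(α s) g)² ≥ 0` says that `-∂² - V ≥ -ν² α²`. -/
lemma ptPot_coercive {α A b : ℝ} (hα : 0 < α) (hb : 2 < b) (hA : b - 3 / 2 < A) {g : ℝ → ℝ}
    (hg : MemH1R g) :
    ∫ s, g s ^ 2 ≤ (α ^ 2 * (4 * A ^ 2 - (2 * b - 3) ^ 2))⁻¹ *
      Bil (4 * A ^ 2 * α ^ 2) (ptPot α b) g g := by
  have hc : 0 < α ^ 2 * (4 * A ^ 2 - (2 * b - 3) ^ 2) := by
    refine mul_pos (by positivity) ?_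
    nlinarith
  rw [inv_mul_eq_div, le_div_iff₀ hc]
  set T : ℝ → ℝ := fun s => sinh (α * s) * sechPow α 1 s with hT
  have hTd : ∀ s, HasDerivAt T (α * sechPow α 2 s) s := by
    intro s
    have := sechPow_hasDerivAt' α 0 s
    simpa [hT] using this
  have hTc : Continuous T := continuous_iff_continuousAt.2 fun s => (hTd s).continuousAt
  have hT2 : ∀ s, T s ^ 2 = 1 - sechPow α 2 s := by
    intro s
    have h1 := sinh_sq_mul_sechPow α 0 s
    have h2 := sechPow_sq α 1 s
    have h3 : sechPow α 0 s = 1 := by simp [sechPow]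
    rw [h3, zero_add] at h1
    rw [mul_one] at h2
    rw [hT, mul_pow, h2, h1]
  have hTb : ∀ s, |T s| ≤ 1 := fun s => by
    rw [← sq_le_one_iff_abs_le_one, hT2]
    linarith [sechPow_pos α 2 s]
  have hSb : ∀ s, |sechPow α 2 s| ≤ 1 := fun s => by
    rw [abs_of_pos (sechPow_pos _ _ _)]; exact sechPow_le_one α (by norm_num) s
  have hS := sechPow_continuous α 2
  have j1 := integrable_mul_of_sq hg.cont hg.contDeriv hg.2.1 hg.2.2
  have k1 : Integrable fun s => T s * (2 * (g s * deriv g s)) :=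
    integrable_bdd_mul hTc hTb (j1.const_mul 2)
  have k2 : Integrable fun s => (α * sechPow α 2 s) * g s ^ 2 :=
    ((integrable_bdd_mul hS hSb hg.2.1).const_mul α).congr
      (ae_of_all _ fun s => (mul_assoc _ _ _).symm)
  have k3 : Integrable fun s => T s * g s ^ 2 := integrable_bdd_mul hTc hTb hg.2.1
  have ibp := integral_mul_deriv_eq_deriv_mul_of_integrable (u := T) (v := fun s => g s ^ 2)
    (u' := fun s => α * sechPow α 2 s) (v' := fun s => 2 * (g s * deriv g s)) (fun s _ => hTd s)
    (fun s _ => by simpa [mul_assoc] using (hg.hasDeriv s).fun_pow 2) k1 k2 k3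
  set ν := 2 * b - 3 with hν
  have hsq : 0 ≤ ∫ s, (deriv g s + ν * α * (T s * g s)) ^ 2 := integral_nonneg fun s => sq_nonneg _
  have ib := integrable_bil (κ := 4 * A ^ 2 * α ^ 2) (ptPot_continuous α b) (ptPot_bound α hb) hg hg
  have m1 : Integrable fun s => α ^ 2 * (4 * A ^ 2 - ν ^ 2) * g s ^ 2 := hg.2.1.const_mul _
  have m2 : Integrable fun s => ν * α * (T s * (2 * (g s * deriv g s))) := k1.const_mul _
  have m3 : Integrable fun s => ν * α * ((α * sechPow α 2 s) * g s ^ 2) := k2.const_mul _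
  have n1 : Integrable fun s => (deriv g s * deriv g s + 4 * A ^ 2 * α ^ 2 * (g s * g s)
      - ptPot α b s * (g s * g s)) - α ^ 2 * (4 * A ^ 2 - ν ^ 2) * g s ^ 2 := ib.sub m1
  have n2 : Integrable fun s => ν * α * (T s * (2 * (g s * deriv g s))) +
      ν * α * ((α * sechPow α 2 s) * g s ^ 2) := m2.add m3
  have hsplit : ∫ s, (deriv g s + ν * α * (T s * g s)) ^ 2 =
      Bil (4 * A ^ 2 * α ^ 2) (ptPot α b) g g - α ^ 2 * (4 * A ^ 2 - ν ^ 2) * ∫ s, g s ^ 2 := by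
    have e1 : ∫ s, (deriv g s + ν * α * (T s * g s)) ^ 2 =
        ∫ s, (((deriv g s * deriv g s + 4 * A ^ 2 * α ^ 2 * (g s * g s)
      - ptPot α b s * (g s * g s)) - α ^ 2 * (4 * A ^ 2 - ν ^ 2) * g s ^ 2) +
        (ν * α * (T s * (2 * (g s * deriv g s))) + ν * α * ((α * sechPow α 2 s) * g s ^ 2))) := by
      refine integral_congr_ae (ae_of_all _ fun s => ?_)
      have h := hT2 s
      simp only [ptPot]
      rw [show 2 * b - 2 = ν + 1 by rw [hν]; ring, ← hν]
      linear_combination (ν ^ 2 * α ^ 2 * g s ^ 2) * h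
    rw [e1, integral_add n1 n2, integral_sub ib m1, integral_add m2 m3, integral_const_mul,
      integral_const_mul, integral_const_mul, ibp, Bil]
    ring
  rw [hsplit] at hsq
  linarith

/-! ### The coefficients of the series -/

/-- The coefficient of `sech ^ (2 b + 2 x)` in the formal series solutions. -/
noncomputable def coefG (A b x : ℝ) : ℝ :=
  Real.Gamma (x + 3 / 2) * Real.Gamma (x + 2 * b - 1) /
    (Real.Gamma (x + b - A + 1) * Real.Gamma (x + b + A + 1))

/-- The quantity that telescopes when the operator is applied to the series with
coefficients `coefG`. -/
noncomputable def coefH (A b x : ℝ) : ℝ :=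
  Real.Gamma (x + 3 / 2) * Real.Gamma (x + 2 * b - 1) /
    (Real.Gamma (x + b - A) * Real.Gamma (x + b + A))

/-- The integral of `sech ^ (2 b)` against the term with coefficient `coefG`, up to a constant;
this is the function `P`. -/
noncomputable def coefP (A b x : ℝ) : ℝ :=
  coefG A b x * (Real.Gamma (x + 2 * b) / Real.Gamma (x + 2 * b + 1 / 2))

/-- At `x + b - A = 0` both sides vanish, since `Real.Gamma 0 = 0`. -/
lemma coefG_mul {A b x : ℝ} (h : 0 < x + b + A) :
    coefG A b x * ((x + b - A) * (x + b + A)) = coefH A b x := by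
  unfold coefG coefH
  rw [Real.Gamma_add_one h.ne']
  rcases eq_or_ne (x + b - A) 0 with h0 | h0
  · simp [h0]
  · rw [Real.Gamma_add_one h0]
    field_simp

lemma coefH_add_one {A b x : ℝ} (h1 : 0 < x + 3 / 2) (h2 : 0 < x + 2 * b - 1) :
    coefH A b (x + 1) = coefG A b x * ((x + 3 / 2) * (x + 2 * b - 1)) := by
  unfold coefG coefH
  rw [show x + 1 + 3 / 2 = (x + 3 / 2) + 1 by ring,
    show x + 1 + 2 * b - 1 = (x + 2 * b - 1) + 1 by ring, Real.Gamma_add_one h1.ne',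
    Real.Gamma_add_one h2.ne', show x + 1 + b - A = x + b - A + 1 by ring,
    show x + 1 + b + A = x + b + A + 1 by ring]
  ring

/-- Partial sums of the formal series `∑ coefG (k + y) sech ^ (2 b + 2 (k + y))`. -/
noncomputable def partSum (α A b y : ℝ) (n : ℕ) (s : ℝ) : ℝ :=
  ∑ k ∈ Finset.range n, coefG A b (k + y) * sechPow α (2 * b + 2 * (k + y)) s

/-- Applied to a partial sum, the operator `-∂² + 4 A² α² - V` leaves only the two boundary
terms of a telescoping sum. -/
lemma partSum_isSol {α A b y : ℝ} (hα : 0 < α) (hb : 2 < b) (hA : b - 3 / 2 < A)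
    (hy : -(3 / 2) < y) (n : ℕ) :
    IsSol (4 * A ^ 2 * α ^ 2) (ptPot α b) (partSum α A b y n) (fun s => 4 * α ^ 2 *
      (coefH A b (n + y) * sechPow α (2 * b + 2 * (n + y)) s -
        coefH A b y * sechPow α (2 * b + 2 * y) s)) := by
  induction n with
  | zero =>
    convert IsSol.zero (4 * A ^ 2 * α ^ 2) (ptPot α b) using 1
    · ext s; simp [partSum]
    · ext s; simp
  | succ n ih =>
    have hn : (0 : ℝ) ≤ n := n.cast_nonneg
    have h := ih.lin (sechPow_isSol A b hα (m := 2 * b + 2 * (n + y)) (by linarith)) 1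
      (coefG A b (n + y))
    convert h using 1
    · ext s; simp [partSum, Finset.sum_range_succ]
    · ext s
      have e1 := coefG_mul (A := A) (b := b) (x := n + y) (by linarith)
      have e2 := coefH_add_one (A := A) (b := b) (x := n + y) (by linarith) (by linarith)
      rw [show ((n + 1 : ℕ) : ℝ) + y = n + y + 1 by push_cast; ring,
        show 2 * b + 2 * (n + y + 1) = 2 * b + 2 * (n + y) + 2 by ring, e2, ← e1]
      ring

lemma ratio_one {c : ℝ} : Tendsto (fun n : ℕ => ((n : ℝ) + c) / n) atTop (𝓝 1) := by
  have : Tendsto (fun n : ℕ => 1 + c / (n : ℝ)) atTop (𝓝 (1 + 0)) :=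
    tendsto_const_nhds.add (tendsto_const_div_atTop_nhds_zero_nat c)
  rw [add_zero] at this
  refine this.congr' ?_
  filter_upwards [eventually_gt_atTop 0] with n hn
  have : (n : ℝ) ≠ 0 := by positivity
  field_simp

lemma coefG_asymp {A b y : ℝ} (hb : 2 < b) (hA : b - 3 / 2 < A) (hy : -(3 / 2) < y)
    (hy' : -1 < y + b - A) :
    Tendsto (fun n : ℕ => coefG A b (n + y) * (n : ℝ) ^ (3 / 2 : ℝ)) atTop (𝓝 1) := by
  have h := (Gamma_ratio (s := y + 1 / 2) (t := y + b - A) (by linarith) hy').mul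
    (Gamma_ratio (s := y + 2 * b - 2) (t := y + b + A) (by linarith) (by linarith))
  rw [one_mul] at h
  refine h.congr' ?_
  filter_upwards [eventually_gt_atTop 0] with n hn
  have hn' : (0 : ℝ) < n := by positivity
  rw [mul_mul_mul_comm, ← rpow_add hn', div_mul_div_comm, coefG]
  ring_nf

lemma coefP_summable {A b y : ℝ} (hb : 2 < b) (hA : b - 3 / 2 < A) (hy : -(3 / 2) < y)
    (hy' : -1 < y + b - A) : Summable fun n : ℕ => coefP A b (n + y) := by
  have h := (coefG_asymp hb hA hy hy').mul
    (Gamma_ratio (s := y + 2 * b - 1) (t := y + 2 * b - 1 / 2) (by linarith) (by linarith))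
  rw [one_mul] at h
  have h2 : Tendsto (fun n : ℕ => coefP A b (n + y) / ((n : ℝ) ^ (2 : ℝ))⁻¹) atTop (𝓝 1) := by
    refine h.congr' ?_
    filter_upwards [eventually_gt_atTop 0] with n hn
    have hn' : (0 : ℝ) < n := by positivity
    rw [div_inv_eq_mul, mul_mul_mul_comm, ← rpow_add hn', coefP,
      show (n : ℝ) + 1 + (y + 2 * b - 1) = n + y + 2 * b by ring,
      show (n : ℝ) + 1 + (y + 2 * b - 1 / 2) = n + y + 2 * b + 1 / 2 by ring,
      show (3 : ℝ) / 2 + (y + 2 * b - 1 / 2 - (y + 2 * b - 1)) = 2 by ring]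
  have hs : Summable fun n : ℕ => ((n : ℝ) ^ (2 : ℝ))⁻¹ :=
    Real.summable_nat_rpow_inv.2 (by norm_num)
  refine summable_of_isBigO_nat hs (isBigO_of_div_tendsto_nhds ?_ 1 h2)
  filter_upwards [eventually_gt_atTop 0] with n hn h0
  have hn' : (0 : ℝ) < n := by positivity
  exact absurd h0 (by positivity)

lemma coefH_asymp {A b y : ℝ} (hb : 2 < b) (hA : b - 3 / 2 < A) (hy : -(3 / 2) < y)
    (hy' : -1 < y + b - A) :
    Tendsto (fun n : ℕ => coefH A b (n + 1 + y) * (n : ℝ) ^ (-(1 / 2) : ℝ)) atTop (𝓝 1) := by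
  have h := (coefG_asymp hb hA hy hy').mul
    ((ratio_one (c := y + 3 / 2)).mul (ratio_one (c := y + 2 * b - 1)))
  rw [one_mul, one_mul] at h
  refine h.congr' ?_
  filter_upwards [eventually_gt_atTop 0] with n hn
  have hn' : (0 : ℝ) < n := by positivity
  have hn0 : (0 : ℝ) ≤ n := n.cast_nonneg
  rw [show (n : ℝ) + 1 + y = n + y + 1 by ring, coefH_add_one (by linarith) (by linarith),
    show (3 / 2 : ℝ) = -(1 / 2) + 2 by ring, rpow_add hn', show ((n : ℝ) ^ (2 : ℝ)) = n ^ 2 by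
      norm_cast]
  field_simp
  ring

/-! ### The energy of the Pöschl–Teller problem -/

lemma coefH_pos {A b x : ℝ} (hb : 2 < b) (hA : b - 3 / 2 < A)
    (hx' : 0 < x + b - A) : 0 < coefH A b x := by
  unfold coefH
  have h1 := Real.Gamma_pos_of_pos (show 0 < x + 3 / 2 by linarith)
  have h2 := Real.Gamma_pos_of_pos (show 0 < x + 2 * b - 1 by linarith)
  have h3 := Real.Gamma_pos_of_pos hx'
  have h4 := Real.Gamma_pos_of_pos (show 0 < x + b + A by linarith)
  positivity

/-- The two boundary terms left over by the two truncated series nearly cancel: their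
difference is `O(1 / n)` times `sech ^ (2 b)`, by Bernoulli's inequality. -/
lemma sechPow_diff {α b ξ : ℝ} (hξ : 0 < ξ) (hξ' : ξ < 3 / 2) (n : ℕ) (s : ℝ) :
    |sechPow α (2 * b + 2 * ((n + 2 : ℕ) - ξ)) s - sechPow α (2 * b + 2 * (n + 2 : ℕ)) s| ≤
      2 / (n + 1) * sechPow α (2 * b) s := by
  set c := cosh (α * s) with hc
  have hc1 : 1 ≤ c := one_le_cosh _
  have hc0 : 0 < c := by linarith
  have e1 : sechPow α (2 * b + 2 * ((n + 2 : ℕ) - ξ)) s =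
      sechPow α (2 * b) s * ((c ^ (2 * (n + 2)))⁻¹ * c ^ (2 * ξ)) := by
    unfold sechPow
    rw [← hc, ← rpow_natCast, ← rpow_neg hc0.le, ← rpow_add hc0, ← rpow_add hc0]
    congr 1; push_cast; ring
  have e2 : sechPow α (2 * b + 2 * (n + 2 : ℕ)) s =
      sechPow α (2 * b) s * (c ^ (2 * (n + 2)))⁻¹ := by
    unfold sechPow
    rw [← hc, ← rpow_natCast, ← rpow_neg hc0.le, ← rpow_add hc0]
    congr 1; push_cast; ring
  have h1 : 1 ≤ c ^ (2 * ξ) := one_le_rpow hc1 (by linarith)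
  have h2 : c ^ (2 * ξ) ≤ c ^ 4 := by
    rw [← rpow_natCast]
    exact rpow_le_rpow_of_exponent_le hc1 (by push_cast; linarith)
  have hB : 1 + ((n + 1 : ℕ) : ℝ) * (c ^ 2 - 1) ≤ c ^ (2 * (n + 1)) := by
    have := one_add_mul_le_pow (a := c ^ 2 - 1) (by nlinarith) (n + 1)
    rwa [add_sub_cancel, ← pow_mul] at this
  push_cast at hB
  have hS := sechPow_pos α (2 * b) s
  rw [e1, e2, ← mul_sub, abs_mul, abs_of_pos hS, mul_comm]
  refine mul_le_mul_of_nonneg_right ?_ hS.le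
  have hp : 0 < c ^ (2 * (n + 2)) := by positivity
  have e3 : (c ^ (2 * (n + 2)))⁻¹ * c ^ (2 * ξ) - (c ^ (2 * (n + 2)))⁻¹ =
      (c ^ (2 * ξ) - 1) / c ^ (2 * (n + 2)) := by field_simp
  rw [e3, abs_of_nonneg (div_nonneg (by linarith) hp.le), div_le_div_iff₀ hp (by positivity)]
  have e4 : c ^ (2 * (n + 2)) = c ^ (2 * (n + 1)) * c ^ 2 := by ring
  rw [e4]
  have hn : (0 : ℝ) < (n : ℝ) + 1 := by positivity
  have hc2 : 1 ≤ c ^ 2 := by nlinarith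
  calc (c ^ (2 * ξ) - 1) * ((n : ℝ) + 1) ≤ (c ^ 4 - 1) * (n + 1) := by gcongr
    _ = ((n + 1) * (c ^ 2 - 1)) * (c ^ 2 + 1) := by ring
    _ ≤ c ^ (2 * (n + 1)) * (2 * c ^ 2) := by
      refine mul_le_mul (by linarith) (by linarith) (by positivity) (by positivity)
    _ = 2 * (c ^ (2 * (n + 1)) * c ^ 2) := by ring

lemma integral_sech_partSum {α A b y : ℝ} (hα : 0 < α) (hb : 2 < b) (hy : -(3 / 2) < y) (n : ℕ) :
    Integrable (fun s => sechPow α (2 * b) s * partSum α A b y n s) ∧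
    ∫ s, sechPow α (2 * b) s * partSum α A b y n s =
      √π / α * ∑ k ∈ Finset.range n, coefP A b (k + y) := by
  have e : ∀ s, sechPow α (2 * b) s * partSum α A b y n s = ∑ k ∈ Finset.range n,
      coefG A b (k + y) * sechPow α (2 * (k + y + 2 * b)) s := by
    intro s
    rw [partSum, Finset.mul_sum]
    refine Finset.sum_congr rfl fun k _ => ?_
    rw [mul_left_comm, sechPow_mul]
    ring_nf
  have hk : ∀ k : ℕ, 0 < 2 * ((k : ℝ) + y + 2 * b) := fun k => by
    have : (0 : ℝ) ≤ k := k.cast_nonneg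
    linarith
  have hi : ∀ k ∈ Finset.range n,
      Integrable fun s => coefG A b (k + y) * sechPow α (2 * (k + y + 2 * b)) s :=
    fun k _ => (sechPow_integrable hα (hk k)).const_mul _
  simp only [e]
  refine ⟨integrable_finsetSum _ hi, ?_⟩
  rw [integral_finsetSum _ hi, Finset.mul_sum]
  refine Finset.sum_congr rfl fun k _ => ?_
  rw [integral_const_mul]
  unfold sechPow
  rw [(cosh_rpow_integral hα (hk k)).2, coefP, mul_div_cancel_left₀ _ (two_ne_zero' ℝ)]
  ring

/-- Two-sided bound on the infimum of the perturbed energy of the Pöschl–Teller operator with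
source `F sech ^ (2 b)`. Since `coefH` vanishes at `-ξ`, the difference of the partial sums
started at `-ξ` and at `0` is an approximate solution up to its top boundary terms. -/
lemma core {α A b F : ℝ} (hα : 0 < α) (hb : 2 < b) (hA : b - 3 / 2 < A) (hA' : A < b)
    (hF : 0 ≤ F) :
    ∃ D : ℝ, 0 < D ∧ ∀ ε : ℝ, 0 ≤ ε → ε * D < 1 → ∀ E : ℝ,
      E = sInf {x : ℝ | ∃ g : ℝ → ℝ, MemH1R g ∧ x = ∫ s,
        ((1 - ε) * (deriv g s ^ 2 + 4 * A ^ 2 * α ^ 2 * g s ^ 2) - ptPot α b s * g s ^ 2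
          - 2 * (F * sechPow α (2 * b) s) * g s)} →
      -(F ^ 2 * √π / (4 * coefH A b 0 * α ^ 3) *
        ∑' k : ℕ, (coefP A b (k - (b - A)) - coefP A b k) / (1 - ε * D)) ≤ E ∧
      E ≤ -(F ^ 2 * √π / (4 * coefH A b 0 * α ^ 3) *
        ∑' k : ℕ, (coefP A b (k - (b - A)) - coefP A b k)) := by
  have hAb : (2 * b - 3) ^ 2 < 4 * A ^ 2 := by nlinarith
  have hc : 0 < α ^ 2 * (4 * A ^ 2 - (2 * b - 3) ^ 2) := mul_pos (by positivity) (by linarith)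
  have hW0 : 0 < α ^ 2 * ((2 * b - 3) * (2 * b - 2)) :=
    mul_pos (by positivity) (mul_pos (by linarith) (by linarith))
  refine ⟨1 + α ^ 2 * ((2 * b - 3) * (2 * b - 2)) * (α ^ 2 * (4 * A ^ 2 - (2 * b - 3) ^ 2))⁻¹,
    by positivity, ?_⟩
  intro ε hε hε' E hE
  set ξ := b - A with hξ
  have hξ0 : 0 < ξ := by linarith
  have hξ1 : ξ < 3 / 2 := by linarith
  set h0 := coefH A b 0 with hh0
  have h0p : 0 < h0 := coefH_pos hb hA (by linarith)
  -- the factor which makes the two boundary terms of order `n` match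
  set lam : ℕ → ℝ := fun n => coefH A b ((n + 2 : ℕ)) / coefH A b ((n + 2 : ℕ) - ξ) with hlam
  have hHp : ∀ n : ℕ, 0 < coefH A b ((n + 2 : ℕ) - ξ) := fun n => by
    have : (0 : ℝ) ≤ n := n.cast_nonneg
    exact coefH_pos hb hA (by push_cast; linarith)
  have hHp' : ∀ n : ℕ, 0 < coefH A b ((n + 2 : ℕ)) := fun n => by
    have : (0 : ℝ) ≤ n := n.cast_nonneg
    exact coefH_pos hb hA (by push_cast; linarith)
  have hH1 := coefH_asymp (A := A) (y := 0) hb hA (by norm_num) (by linarith)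
  have hH2 := coefH_asymp (A := A) (y := -ξ) hb hA (by linarith) (by linarith)
  have hlam1 : Tendsto lam atTop (𝓝 1) := by
    have h := hH1.div hH2 one_ne_zero
    rw [div_one, ← tendsto_add_atTop_iff_nat 1] at h
    refine h.congr fun n => ?_
    have : (((n + 1 : ℕ) : ℝ)) ^ (-(1 / 2) : ℝ) ≠ 0 := by positivity
    simp only [Pi.div_apply, hlam]
    rw [mul_div_mul_right _ _ this]
    push_cast
    ring_nf
  -- `coefH` grows like `n ^ (1 / 2)`, which loses to the factor `1 / n` of `sechPow_diff`
  set e : ℕ → ℝ := fun n => coefH A b ((n + 2 : ℕ)) / h0 * (2 / (n + 1)) with he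
  have he0 : ∀ n, 0 ≤ e n := fun n => by
    have := hHp' n
    simp only [he]; positivity
  have hel : Tendsto e atTop (𝓝 0) := by
    have hz : Tendsto (fun n : ℕ => (n : ℝ) ^ (-(1 / 2) : ℝ)) atTop (𝓝 0) :=
      (tendsto_rpow_neg_atTop (by norm_num)).comp tendsto_natCast_atTop_atTop
    have h := (hH1.mul hz).const_mul (2 / h0)
    rw [mul_zero, mul_zero, ← tendsto_add_atTop_iff_nat 1] at h
    refine h.congr fun n => ?_
    have hn : (0 : ℝ) < (n + 1 : ℕ) := by positivity
    rw [mul_assoc, ← rpow_add hn, show -(1 / 2 : ℝ) + -(1 / 2) = -1 by norm_num, rpow_neg_one]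
    simp only [he]
    push_cast
    rw [show (n : ℝ) + 1 + 1 + 0 = n + 2 by ring]
    field_simp
  -- a genuine zero of `1 / Γ`, matching the junk value `Real.Gamma 0 = 0` and `x / 0 = 0`
  have hHz : coefH A b (-ξ) = 0 := by
    unfold coefH
    rw [show -ξ + b - A = 0 by rw [hξ]; ring]
    simp
  set φ : ℕ → ℝ → ℝ := fun n s => F / (4 * h0 * α ^ 2) * lam n * partSum α A b (-ξ) (n + 2) s +
    -(F / (4 * h0 * α ^ 2)) * partSum α A b 0 (n + 2) s with hφ
  set r : ℕ → ℝ → ℝ := fun n s => F * (coefH A b ((n + 2 : ℕ)) / h0) *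
    (sechPow α (2 * b + 2 * ((n + 2 : ℕ) - ξ)) s - sechPow α (2 * b + 2 * (n + 2 : ℕ)) s) with hr
  have hsol : ∀ n, IsSol (4 * A ^ 2 * α ^ 2) (ptPot α b) (φ n)
      (fun s => F * sechPow α (2 * b) s + r n s) := by
    intro n
    have h := (partSum_isSol (A := A) hα hb hA (show -(3 / 2) < -ξ by linarith) (n + 2)).lin
      (partSum_isSol (A := A) hα hb hA (show -(3 / 2) < (0 : ℝ) by norm_num) (n + 2))
      (F / (4 * h0 * α ^ 2) * lam n) (-(F / (4 * h0 * α ^ 2)))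
    convert h using 1
    ext s
    have hl : coefH A b ((n + 2 : ℕ)) = lam n * coefH A b ((n + 2 : ℕ) - ξ) := by
      simp only [hlam]; rw [div_mul_cancel₀ _ (hHp n).ne']
    simp only [hr, hHz, ← sub_eq_add_neg, add_zero, mul_zero, zero_mul, sub_zero, ← hh0]
    rw [hl]
    field_simp
    ring
  have hrb : ∀ n s, |r n s| ≤ e n * (F * sechPow α (2 * b) s) := by
    intro n s
    have h := sechPow_diff (α := α) (b := b) hξ0 hξ1 n s
    have hk : 0 ≤ F * (coefH A b ((n + 2 : ℕ)) / h0) :=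
      mul_nonneg hF (div_nonneg (hHp' n).le h0p.le)
    simp only [hr, he]
    rw [abs_mul, abs_of_nonneg hk]
    refine (mul_le_mul_of_nonneg_left h hk).trans (le_of_eq ?_)
    ring
  have s1 : Summable fun k : ℕ => coefP A b (k + -ξ) :=
    coefP_summable hb hA (by linarith) (by linarith)
  have s0 : Summable fun k : ℕ => coefP A b (k + 0) :=
    coefP_summable hb hA (by norm_num) (by linarith)
  have hI : Tendsto (fun n => ∫ s, (F * sechPow α (2 * b) s) * φ n s) atTop
      (𝓝 (F ^ 2 * √π / (4 * h0 * α ^ 3) *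
        ∑' k : ℕ, (coefP A b (k - ξ) - coefP A b k))) := by
    have t1 := s1.hasSum.tendsto_sum_nat
    have t0 := s0.hasSum.tendsto_sum_nat
    rw [← tendsto_add_atTop_iff_nat 2] at t1 t0
    have h := ((hlam1.mul t1).sub t0).const_mul (F ^ 2 * √π / (4 * h0 * α ^ 3))
    rw [one_mul, ← s1.tsum_sub s0] at h
    simp only [add_zero, ← sub_eq_add_neg] at h
    refine h.congr fun n => ?_
    obtain ⟨i1, j1⟩ := integral_sech_partSum (A := A) hα hb (show -(3 / 2) < -ξ by linarith) (n + 2)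
    obtain ⟨i0, j0⟩ := integral_sech_partSum (A := A) hα hb
      (show -(3 / 2) < (0 : ℝ) by norm_num) (n + 2)
    have e1 : ∫ s, (F * sechPow α (2 * b) s) * φ n s =
        ∫ s, (F * (F / (4 * h0 * α ^ 2)) * lam n *
          (sechPow α (2 * b) s * partSum α A b (-ξ) (n + 2) s) -
          F * (F / (4 * h0 * α ^ 2)) * (sechPow α (2 * b) s * partSum α A b 0 (n + 2) s)) := by
      refine integral_congr_ae (ae_of_all _ fun s => ?_)
      simp only [hφ]; ring
    rw [e1, integral_sub (i1.const_mul _) (i0.const_mul _), integral_const_mul,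
      integral_const_mul, j1, j0]
    simp only [add_zero, ← sub_eq_add_neg]
    field_simp
  have hf2 : Integrable fun s => (F * sechPow α (2 * b) s) ^ 2 := by
    have := (sechPow_integrable hα (show 0 < 2 * (2 * b) by linarith)).const_mul (F ^ 2)
    simpa only [mul_pow, sechPow_sq] using this
  have hfin := sandwich (ptPot_continuous α b) (ptPot_bound α hb)
    (show 0 < 4 * A ^ 2 * α ^ 2 by
      have : 0 < A := by linarith
      positivity) (inv_pos.2 hc) (fun g hg => ptPot_coercive hα hb hA hg)
    (continuous_const.mul (sechPow_continuous α (2 * b))) hf2 hsol hrb he0 hel hI hε hε' hE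
  rw [tsum_div_const, ← mul_div_assoc]
  exact hfin

/-! ### Translation to the variational problem of the statement -/

lemma Pfun_eq_coefP (d : ℕ) (q Λ x : ℝ) :
    Pfun d q Λ x = coefP (afrak d q Λ) (bfrak q) x := by
  unfold Pfun coefP coefG
  rw [mul_div_mul_comm]

lemma bfrak_eq {q : ℝ} (hq : 2 < q) : bfrak q = 2 + 1 / (q - 2) := by
  have : q - 2 ≠ 0 := by linarith
  unfold bfrak; field_simp; ring

lemma afrak_sq {d : ℕ} {q Λ : ℝ} (hΛ : 0 < Λ) :
    afrak d q Λ ^ 2 = (1 + 2 * d / Λ) / (q - 2) ^ 2 := by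
  unfold afrak
  rw [div_pow, sq_sqrt (by positivity)]

lemma alphaV_sq {q Λ : ℝ} (hΛ : 0 < Λ) : alphaV q Λ ^ 2 = (q - 2) ^ 2 * Λ / 4 := by
  unfold alphaV
  rw [mul_pow, sq_sqrt hΛ.le]; ring

/-- Under the Felli–Schneider condition `0 < ξ < 3 / 2`. -/
lemma afrak_bounds {d : ℕ} (hd : 2 ≤ d) {q Λ : ℝ} (hq : 2 < q) (hΛ : 0 < Λ)
    (hFS : Λ = 4 * ((d : ℝ) - 1) / (q ^ 2 - 4)) :
    bfrak q - 3 / 2 < afrak d q Λ ∧ afrak d q Λ < bfrak q := by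
  have hd' : (2 : ℝ) ≤ d := by exact_mod_cast hd
  have hq2 : 0 < q - 2 := by linarith
  have hq4 : 0 < q ^ 2 - 4 := by nlinarith
  have hA0 : 0 ≤ afrak d q Λ := by unfold afrak; positivity
  have hsq := afrak_sq (d := d) (q := q) hΛ
  rw [bfrak_eq hq]
  obtain ⟨p, hp⟩ : ∃ p, p = 1 / (q - 2) := ⟨_, rfl⟩
  have hp0 : 0 < p := by rw [hp]; positivity
  have key : afrak d q Λ ^ 2 = p ^ 2 + (4 * p + 1) * (d / (2 * (d - 1))) := by
    have h1 : (d : ℝ) - 1 ≠ 0 := by linarith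
    rw [hsq, hFS, hp]
    field_simp
    ring
  rw [← hp]
  obtain ⟨t, ht⟩ : ∃ t : ℝ, t = d / (2 * (d - 1)) := ⟨_, rfl⟩
  have ht1 : 1 / 2 ≤ t := by
    rw [ht, div_le_div_iff₀ (by norm_num) (by linarith)]; linarith
  have ht2 : t ≤ 1 := by rw [ht, div_le_one (by linarith)]; linarith
  rw [← ht] at key
  constructor
  · refine lt_of_pow_lt_pow_left₀ 2 hA0 ?_
    rw [key]; nlinarith
  · refine lt_of_pow_lt_pow_left₀ 2 (by positivity) ?_
    rw [key]; nlinarith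

lemma betaV_pos {q Λ : ℝ} (hq : 2 < q) (hΛ : 0 < Λ) : 0 < betaV q Λ := by
  unfold betaV; exact rpow_pos_of_pos (by positivity) _

lemma betaV_rpow {q Λ : ℝ} (hq : 2 < q) (hΛ : 0 < Λ) : betaV q Λ ^ (q - 2) = q * Λ / 2 := by
  have h0 : 0 ≤ q * Λ / 2 := by positivity
  have : q - 2 ≠ 0 := by linarith
  unfold betaV
  rw [← rpow_mul h0, one_div_mul_cancel this, rpow_one]

lemma Ufun_rpow {q Λ : ℝ} (hq : 2 < q) (hΛ : 0 < Λ) (r s : ℝ) :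
    Ufun q Λ s ^ r = betaV q Λ ^ r * sechPow (alphaV q Λ) (2 / (q - 2) * r) s := by
  unfold Ufun sechPow
  have hc := cosh_pos (alphaV q Λ * s)
  rw [mul_rpow (betaV_pos hq hΛ).le (rpow_nonneg hc.le _), ← rpow_mul hc.le, neg_mul]

/-- The potential `(q - 1) u ^ (q - 2)` is of Pöschl–Teller type. -/
lemma potential_eq {q Λ : ℝ} (hq : 2 < q) (hΛ : 0 < Λ) (s : ℝ) :
    (q - 1) * Ufun q Λ s ^ (q - 2) = ptPot (alphaV q Λ) (bfrak q) s := by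
  have h2 : q - 2 ≠ 0 := by linarith
  rw [Ufun_rpow hq hΛ, betaV_rpow hq hΛ, div_mul_cancel₀ _ h2]
  unfold ptPot
  rw [alphaV_sq hΛ, bfrak_eq hq]
  field_simp
  ring

/-- The amplitude of the inhomogeneity `f⁽²⁾`, which is a multiple of `sech ^ (2 𝔟)`. -/
noncomputable def amplF (d : ℕ) (q Λ : ℝ) : ℝ :=
  Mconst d q * betaV q Λ ^ (2 * q - 3) * √(2 * ((d : ℝ) - 1) / ((d : ℝ) + 2))

lemma f2fun_eq (d : ℕ) {q Λ : ℝ} (hq : 2 < q) (hΛ : 0 < Λ) (s : ℝ) :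
    f2fun d q Λ s = amplF d q Λ * sechPow (alphaV q Λ) (2 * bfrak q) s := by
  unfold f2fun amplF
  have : 2 / (q - 2) * (2 * q - 3) = 2 * bfrak q := by unfold bfrak; ring
  rw [Ufun_rpow hq hΛ, this]; ring

lemma kappa_eq {d : ℕ} {q Λ : ℝ} (hq : 2 < q) (hΛ : 0 < Λ) :
    2 * d + Λ = 4 * afrak d q Λ ^ 2 * alphaV q Λ ^ 2 := by
  have h2 : q - 2 ≠ 0 := by linarith
  rw [afrak_sq hΛ, alphaV_sq hΛ]
  field_simp
  ring

lemma amplF_nonneg {d : ℕ} {q Λ : ℝ} (hq : 2 < q) (hΛ : 0 < Λ) : 0 ≤ amplF d q Λ := by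
  have h1 := (rpow_pos_of_pos (betaV_pos hq hΛ) (2 * q - 3)).le
  have h2 : 0 ≤ q - 2 := by linarith
  have h3 : 0 ≤ q - 1 := by linarith
  unfold amplF Mconst
  positivity

lemma amplF_sq {d : ℕ} (hd : 2 ≤ d) {q Λ : ℝ} (hq : 2 < q) (hΛ : 0 < Λ) :
    amplF d q Λ ^ 2 = ((q - 1) * (q - 2)) ^ 2 * sphVol d / (4 * (d : ℝ) ^ 2) *
      (betaV q Λ ^ (3 * q - 4) * (q * Λ / 2)) * (2 * ((d : ℝ) - 1) / ((d : ℝ) + 2)) := by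
  have hd' : (2 : ℝ) ≤ d := by exact_mod_cast hd
  have hS : 0 ≤ sphVol d := ENNReal.toReal_nonneg
  have hr : 0 ≤ 2 * ((d : ℝ) - 1) / ((d : ℝ) + 2) :=
    div_nonneg (by linarith) (by linarith)
  have hβ : (betaV q Λ ^ (2 * q - 3)) ^ 2 = betaV q Λ ^ (3 * q - 4) * (q * Λ / 2) := by
    rw [← betaV_rpow hq hΛ, sq, ← rpow_add (betaV_pos hq hΛ), ← rpow_add (betaV_pos hq hΛ)]
    congr 1; ring
  unfold amplF Mconst
  rw [mul_pow, mul_pow, hβ, sq_sqrt hr, div_pow, mul_pow, sq_sqrt hS]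
  ring

/-- The constant produced by `core` is the one of the asymptotic expansion. -/
lemma const_eq {d : ℕ} (hd : 2 ≤ d) {q Λ : ℝ} (hq : 2 < q) (hΛ : 0 < Λ)
    (hFS : Λ = 4 * ((d : ℝ) - 1) / (q ^ 2 - 4)) :
    amplF d q Λ ^ 2 * √π / (4 * coefH (afrak d q Λ) (bfrak q) 0 * alphaV q Λ ^ 3) =
      (betaV q Λ ^ (3 * q - 4) / alphaV q Λ) * (sphVol d / (4 * (d : ℝ) ^ 2)) *
          (Real.Gamma ((3 * q - 4) / (q - 2)) * Real.sqrt π /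
            Real.Gamma ((3 * q - 4) / (q - 2) + 1 / 2)) *
          (q * (q - 1) * (q - 2) * ((d : ℝ) - 1) / (((d : ℝ) + 2) * Pfun d q Λ (-1))) := by
  obtain ⟨hA, hA'⟩ := afrak_bounds hd hq hΛ hFS
  have hd' : (2 : ℝ) ≤ d := by exact_mod_cast hd
  have hbe := bfrak_eq hq
  have hq2 : 0 < q - 2 := by linarith
  have hb : 2 < bfrak q := by
    rw [hbe]
    have : 0 < 1 / (q - 2) := by positivity
    linarith
  have hα : 0 < alphaV q Λ := by unfold alphaV; positivity
  have hα3 : alphaV q Λ ^ 3 = (q - 2) ^ 2 * Λ / 4 * alphaV q Λ := by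
    rw [← alphaV_sq hΛ]; ring
  have e1 : (3 * q - 4) / (q - 2) = 2 * bfrak q - 1 := by unfold bfrak; field_simp; ring
  have hG1 : Real.Gamma (2 * bfrak q - 1) =
      (2 * (q - 1) / (q - 2)) * Real.Gamma (2 * bfrak q - 2) := by
    have h := Real.Gamma_add_one (s := 2 * bfrak q - 2) (by linarith)
    rw [show 2 * bfrak q - 2 + 1 = 2 * bfrak q - 1 by ring] at h
    rw [h]; congr 1; unfold bfrak; field_simp; ring
  have hG2 : Real.Gamma (3 / 2) = 1 / 2 * √π := by
    have h := Real.Gamma_add_one (s := 1 / 2) (by norm_num)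
    rw [Real.Gamma_one_half_eq] at h
    rw [← h]; norm_num
  rw [e1, hα3, amplF_sq hd hq hΛ]
  unfold coefH Pfun
  rw [show (-1 : ℝ) + 3 / 2 = 1 / 2 by norm_num, Real.Gamma_one_half_eq,
    show -1 + 2 * bfrak q - 1 = 2 * bfrak q - 2 by ring,
    show -1 + 2 * bfrak q = 2 * bfrak q - 1 by ring,
    show -1 + bfrak q - afrak d q Λ + 1 = bfrak q - afrak d q Λ by ring,
    show -1 + bfrak q + afrak d q Λ + 1 = bfrak q + afrak d q Λ by ring]
  simp only [zero_add]
  rw [hG1, hG2]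
  have g1 := (Real.Gamma_pos_of_pos (show 0 < 2 * bfrak q - 2 by linarith)).ne'
  have g2 := (Real.Gamma_pos_of_pos (show 0 < bfrak q - afrak d q Λ by linarith)).ne'
  have g3 := (Real.Gamma_pos_of_pos (show 0 < bfrak q + afrak d q Λ by linarith)).ne'
  have g4 := (Real.Gamma_pos_of_pos (show 0 < 2 * bfrak q - 1 + 1 / 2 by linarith)).ne'
  have hpi : √π ≠ 0 := by positivity
  have hq1 : q - 1 ≠ 0 := by linarith
  generalize Real.Gamma (2 * bfrak q - 2) = G1 at *
  generalize Real.Gamma (bfrak q - afrak d q Λ) = G2 at *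
  generalize Real.Gamma (bfrak q + afrak d q Λ) = G3 at *
  generalize Real.Gamma (2 * bfrak q - 1 + 1 / 2) = G4 at *
  field_simp

lemma E2_eq (d : ℕ) {q Λ : ℝ} (hq : 2 < q) (hΛ : 0 < Λ) (ε : ℝ) :
    E2 d q Λ ε = sInf {x | ∃ g, MemH1R g ∧ x = ∫ s, ((1 - ε) * (deriv g s ^ 2 +
      4 * afrak d q Λ ^ 2 * alphaV q Λ ^ 2 * g s ^ 2) - ptPot (alphaV q Λ) (bfrak q) s * g s ^ 2 -
      2 * (amplF d q Λ * sechPow (alphaV q Λ) (2 * bfrak q) s) * g s)} := by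
  unfold E2 Energy
  simp only [potential_eq hq hΛ, f2fun_eq d hq hΛ, kappa_eq hq hΛ]

/-- Energy of the degree 2 solution. Under the Felli–Schneider condition,
as ε → 0⁺,
`E⁽²⁾(ε) = -(β^{3q-4}/α)(|𝕊^{d-1}|/(4d²))(Γ((3q-4)/(q-2))√π/Γ((3q-4)/(q-2)+1/2))·
(q(q-1)(q-2)(d-1)/((d+2)P(-1)))·Σ_{k=0}^∞ (P(k-ξ)-P(k)) + O(ε)`. -/
theorem E2_asymptotics (d : ℕ) (hd : 2 ≤ d) (q : ℝ) (hq : 2 < q)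
    (hq' : d = 2 ∨ q < 2 * d / ((d : ℝ) - 2)) (Λ : ℝ) (hΛ : 0 < Λ)
    (hFS : Λ = 4 * ((d : ℝ) - 1) / (q ^ 2 - 4)) :
    (fun ε : ℝ => E2 d q Λ ε -
        (-(betaV q Λ ^ (3 * q - 4) / alphaV q Λ) * (sphVol d / (4 * (d : ℝ) ^ 2)) *
          (Real.Gamma ((3 * q - 4) / (q - 2)) * Real.sqrt π /
            Real.Gamma ((3 * q - 4) / (q - 2) + 1 / 2)) *
          (q * (q - 1) * (q - 2) * ((d : ℝ) - 1) / (((d : ℝ) + 2) * Pfun d q Λ (-1))) *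
          ∑' k : ℕ, (Pfun d q Λ ((k : ℝ) - xiV d q Λ) - Pfun d q Λ (k : ℝ))))
      =O[𝓝[≥] (0 : ℝ)] fun ε => ε := by
  obtain ⟨hA, hA'⟩ := afrak_bounds hd hq hΛ hFS
  have hq2 : 0 < q - 2 := by linarith
  have hb : 2 < bfrak q := by
    rw [bfrak_eq hq]
    have : 0 < 1 / (q - 2) := by positivity
    linarith
  have hα : 0 < alphaV q Λ := by unfold alphaV; positivity
  obtain ⟨D, hD, hcore⟩ := core hα hb hA hA' (amplF_nonneg (d := d) hq hΛ)
  have hc := const_eq hd hq hΛ hFS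
  simp only [tsum_div_const, ← Pfun_eq_coefP] at hcore
  rw [hc] at hcore
  set S := ∑' k : ℕ, (Pfun d q Λ ((k : ℝ) - xiV d q Λ) - Pfun d q Λ (k : ℝ)) with hS
  change ∀ ε, 0 ≤ ε → ε * D < 1 → ∀ E, _ → -(_ * (S / (1 - ε * D))) ≤ E ∧ E ≤ -(_ * S) at hcore
  simp only [neg_mul]
  generalize (betaV q Λ ^ (3 * q - 4) / alphaV q Λ) * (sphVol d / (4 * (d : ℝ) ^ 2)) *
          (Real.Gamma ((3 * q - 4) / (q - 2)) * Real.sqrt π /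
            Real.Gamma ((3 * q - 4) / (q - 2) + 1 / 2)) *
          (q * (q - 1) * (q - 2) * ((d : ℝ) - 1) / (((d : ℝ) + 2) * Pfun d q Λ (-1))) = K
    at hcore ⊢
  refine IsBigO.of_bound (2 * |K * S| * D) ?_
  have hev : ∀ᶠ ε in 𝓝[≥] (0 : ℝ), ε < 1 / (2 * D) :=
    nhdsWithin_le_nhds (Iio_mem_nhds (by positivity))
  filter_upwards [hev, self_mem_nhdsWithin] with ε h1 h0
  have h0' : 0 ≤ ε := h0
  have h2 : ε * D < 1 / 2 := by
    rw [lt_div_iff₀ (by positivity)] at h1; linarith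
  obtain ⟨hl, hu⟩ := hcore ε h0' (by linarith) _ (E2_eq d hq hΛ ε)
  have hpos : 0 < 1 - ε * D := by linarith
  have hεD : 0 ≤ ε * D := by positivity
  -- `1 / (1 - ε D) - 1 ≤ 2 ε D` as soon as `ε D ≤ 1 / 2`
  have hdiff : K * (S / (1 - ε * D)) - K * S = (K * S) * (ε * D / (1 - ε * D)) := by
    field_simp; ring
  have hfrac : ε * D / (1 - ε * D) ≤ 2 * (ε * D) := by
    rw [div_le_iff₀ hpos]; nlinarith
  have hfrac0 : 0 ≤ ε * D / (1 - ε * D) := by positivity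
  have hmain : (K * S) * (ε * D / (1 - ε * D)) ≤ |K * S| * (2 * (ε * D)) :=
    mul_le_mul (le_abs_self _) hfrac hfrac0 (abs_nonneg _)
  rw [Real.norm_eq_abs, Real.norm_eq_abs, abs_of_nonneg h0', abs_of_nonpos (by linarith)]
  linarith
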